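/- Let Ω ⊂ ℝ^n be a nonempty bounded domain and k ∈ ℕ. Then: (b) for every ε > 0 the set S_ε^k is symmetric, i.e. S_ε^k = −S_ε^k; and (c) there exists ε̄_k > 0 such that for every ε ∈ (0, ε̄_k), 0 ∉ S_ε^k, i.e. no function L_ε(φ_λ) ∘ P₁ with |λ| = 1 vanishes almost everywhere on Ω. -/

import Mathlib

open MeasureTheory Real Set
open scoped ENNReal

noncomputable section

/-- The double well potential: an even nonnegative `C²` function vanishing exactly at `±1`,
positive on `(-1,1)`, with nondegenerate minima at `±1`. -/
def IsDoubleWell (W : ℝ → ℝ) : Prop :=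
  ContDiff ℝ 2 W ∧ (∀ t, W (-t) = W t) ∧ (∀ t, 0 ≤ W t) ∧
  W 1 = 0 ∧ W (-1) = 0 ∧ (∀ t ∈ Set.Ioo (-1 : ℝ) 1, 0 < W t) ∧
  deriv W 1 = 0 ∧ deriv W (-1) = 0 ∧
  0 < iteratedDeriv 2 W 1 ∧ 0 < iteratedDeriv 2 W (-1)

/-- The Gagliardo double integral `∫_Ω ∫_Ω |u(x)-u(y)|² / |x-y|^{n+2s} dx dy`. -/
def gagliardo (n : ℕ) (s : ℝ) (Ω : Set (EuclideanSpace ℝ (Fin n)))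
    (u : EuclideanSpace ℝ (Fin n) → ℝ) : ℝ≥0∞ :=
  ∫⁻ x in Ω, ∫⁻ y in Ω, ENNReal.ofReal (|u x - u y| ^ 2 / dist x y ^ ((n : ℝ) + 2 * s))

/-- The potential term `∫_Ω W(u) dx`. -/
def potentialTerm (n : ℕ) (Ω : Set (EuclideanSpace ℝ (Fin n))) (W : ℝ → ℝ)
    (u : EuclideanSpace ℝ (Fin n) → ℝ) : ℝ≥0∞ :=
  ∫⁻ x in Ω, ENNReal.ofReal (W (u x))

/-- The cosine polynomial `φ_λ(t) = ∑_{m=0}^k λ⁽ᵐ⁾ cos(m t)`. -/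
def cosPoly (k : ℕ) (lam : EuclideanSpace ℝ (Fin (k + 1))) (t : ℝ) : ℝ :=
  ∑ m : Fin (k + 1), lam m * Real.cos ((m : ℕ) * t)

/-- The averaged sign `L_ε(φ_λ)(t) = (1/(2ε)) ∫_{t-ε}^{t+ε} φ_λ(τ)/|φ_λ(τ)| dτ`. -/
def Lavg (k : ℕ) (ε : ℝ) (lam : EuclideanSpace ℝ (Fin (k + 1))) (t : ℝ) : ℝ :=
  (1 / (2 * ε)) * ∫ τ in (t - ε)..(t + ε), cosPoly k lam τ / |cosPoly k lam τ|

/-- The family `S_ε^k = { L_ε(φ_λ) ∘ P₁ : |λ| = 1 }` of functions on `ℝ^n`. -/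
def Sset (n k : ℕ) (hn : 0 < n) (ε : ℝ) : Set (EuclideanSpace ℝ (Fin n) → ℝ) :=
  {f | ∃ lam : EuclideanSpace ℝ (Fin (k + 1)), ‖lam‖ = 1 ∧
    ∀ x, f x = Lavg k ε lam (x ⟨0, hn⟩)}

/-- The algebraic polynomial `p` with `p (cos t) = φ_λ(t)`, in the Chebyshev basis. -/
def chebyshevSum (k : ℕ) (lam : EuclideanSpace ℝ (Fin (k + 1))) : Polynomial ℝ :=
  ∑ m : Fin (k + 1), lam m • Polynomial.Chebyshev.T ℝ ((m : ℕ) : ℤ)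

theorem eval_cos_chebyshevSum (k : ℕ) (lam : EuclideanSpace ℝ (Fin (k + 1))) (t : ℝ) :
    (chebyshevSum k lam).eval (cos t) = cosPoly k lam t := by
  simp [chebyshevSum, cosPoly, Polynomial.eval_finsetSum, Polynomial.Chebyshev.T_real_cos]

theorem natDegree_chebyshevSum_le (k : ℕ) (lam : EuclideanSpace ℝ (Fin (k + 1))) :
    (chebyshevSum k lam).natDegree ≤ k := by
  refine Polynomial.natDegree_sum_le_of_forall_le _ _ fun m _ => ?_
  refine (Polynomial.natDegree_smul_le _ _).trans ?_
  rw [Polynomial.Chebyshev.natDegree_T, Int.natAbs_natCast]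
  exact Nat.lt_succ_iff.mp m.isLt

theorem chebyshevSum_ne_zero {k : ℕ} {lam : EuclideanSpace ℝ (Fin (k + 1))} (h : lam ≠ 0) :
    chebyshevSum k lam ≠ 0 := by
  intro h0
  have hli := (Polynomial.Chebyshev.chebyshevTsequence ℝ).linearIndependent.comp
    (fun m : Fin (k + 1) => (m : ℕ)) Fin.val_injective
  rw [Fintype.linearIndependent_iff] at hli
  exact h (PiLp.ext fun m => hli (fun m => lam m) h0 m)

theorem continuous_cosPoly (k : ℕ) (lam : EuclideanSpace ℝ (Fin (k + 1))) :
    Continuous (cosPoly k lam) := by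
  unfold cosPoly
  fun_prop

theorem cosPoly_neg (k : ℕ) (lam : EuclideanSpace ℝ (Fin (k + 1))) (t : ℝ) :
    cosPoly k (-lam) t = -cosPoly k lam t := by
  simp [cosPoly]

theorem Lavg_neg (k : ℕ) (ε : ℝ) (lam : EuclideanSpace ℝ (Fin (k + 1))) (t : ℝ) :
    Lavg k ε (-lam) t = -Lavg k ε lam t := by
  simp [Lavg, cosPoly_neg, neg_div]

theorem neg_mem_Sset {n k : ℕ} {hn : 0 < n} {ε : ℝ} {f : EuclideanSpace ℝ (Fin n) → ℝ}
    (hf : f ∈ Sset n k hn ε) : -f ∈ Sset n k hn ε := by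
  obtain ⟨lam, hlam, h⟩ := hf
  exact ⟨-lam, by rwa [norm_neg], fun x => by rw [Lavg_neg, Pi.neg_apply, h]⟩

theorem injOn_cos_Ioo_int_mul_pi (j : ℤ) : InjOn cos (Ioo (j * π) ((j + 1) * π)) := by
  intro x hx y hy h
  have key : cos (x - j * π) = cos (y - j * π) := by
    rw [cos_sub_int_mul_pi, cos_sub_int_mul_pi, h]
  have := injOn_cos ⟨by linarith [hx.1], by linarith [hx.2]⟩
    ⟨by linarith [hy.1], by linarith [hy.2]⟩ key
  linarith

/-- Among `k + 1` consecutive intervals of equal length `h` lying between two consecutive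
multiples of `π`, a nontrivial cosine polynomial of order `k` has no zero on at least one. -/
theorem exists_subinterval_cosPoly_ne_zero {k : ℕ} {lam : EuclideanSpace ℝ (Fin (k + 1))}
    (hlam : lam ≠ 0) {j : ℤ} {c h : ℝ} (hh : 0 < h) (hc : j * π ≤ c)
    (hch : c + (k + 1) * h ≤ (j + 1) * π) :
    ∃ i : Fin (k + 1), ∀ t ∈ Ioo (c + (i : ℕ) * h) (c + ((i : ℕ) + 1) * h),
      cosPoly k lam t ≠ 0 := by
  by_contra! hcon
  choose t ht htz using hcon
  have hmono : StrictMono t := by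
    intro a b hab
    have h1 : ((a : ℕ) : ℝ) + 1 ≤ (b : ℕ) := by exact_mod_cast hab
    have h2 := mul_le_mul_of_nonneg_right h1 hh.le
    linarith [(ht a).2, (ht b).1]
  have hmem : ∀ i, t i ∈ Ioo (j * π) ((j + 1) * π) := by
    intro i
    have h0 : (0 : ℝ) ≤ (i : ℕ) * h := by positivity
    have h1 : ((i : ℕ) : ℝ) + 1 ≤ k + 1 := by exact_mod_cast i.isLt
    have h2 := mul_le_mul_of_nonneg_right h1 hh.le
    exact ⟨by linarith [(ht i).1], by linarith [(ht i).2]⟩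
  refine chebyshevSum_ne_zero hlam
    (Polynomial.eq_zero_of_natDegree_lt_card_of_eval_eq_zero _ (f := fun i => cos (t i)) ?_ ?_ ?_)
  · exact fun a b hab => hmono.injective (injOn_cos_Ioo_int_mul_pi j (hmem a) (hmem b) hab)
  · exact fun i => by rw [eval_cos_chebyshevSum, htz]
  · rw [Fintype.card_fin]
    exact Nat.lt_succ_of_le (natDegree_chebyshevSum_le k lam)

theorem Lavg_ne_zero {k : ℕ} {lam : EuclideanSpace ℝ (Fin (k + 1))} {ε a b t : ℝ} (hε : 0 < ε)
    (hne : ∀ τ ∈ Ioo a b, cosPoly k lam τ ≠ 0) (ha : a < t - ε) (hb : t + ε < b) :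
    Lavg k ε lam t ≠ 0 := by
  have hsub : uIcc (t - ε) (t + ε) ⊆ Ioo a b := by
    rw [uIcc_of_le (by linarith)]
    exact fun τ hτ => ⟨ha.trans_le hτ.1, hτ.2.trans_lt hb⟩
  have hsign : ∃ s : ℝ, s ≠ 0 ∧
      ∀ τ ∈ Ioo a b, cosPoly k lam τ / |cosPoly k lam τ| = s := by
    rcases isPreconnected_Ioo.mapsTo_Ioi_or_Iio (continuous_cosPoly k lam).continuousOn hne
      with h | h
    · refine ⟨1, one_ne_zero, fun τ hτ => ?_⟩
      rw [abs_of_pos (h hτ), div_self (hne τ hτ)]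
    · refine ⟨-1, neg_ne_zero.mpr one_ne_zero, fun τ hτ => ?_⟩
      rw [abs_of_neg (h hτ), div_neg, div_self (hne τ hτ)]
  obtain ⟨s, hs, hsc⟩ := hsign
  have hint : ∫ τ in (t - ε)..(t + ε), cosPoly k lam τ / |cosPoly k lam τ| = (2 * ε) * s := by
    rw [intervalIntegral.integral_congr (g := fun _ => s) fun τ hτ => hsc τ (hsub hτ),
      intervalIntegral.integral_const, smul_eq_mul]
    ring
  rw [Lavg, hint]
  positivity

/-- A point `x` can be moved along the `i`-th axis to any nearby `i`-th coordinate. -/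
theorem exists_mem_ball_apply_eq {n : ℕ} (i : Fin n) (x : EuclideanSpace ℝ (Fin n)) {r t : ℝ}
    (ht : |t - x i| < r) : ∃ y ∈ Metric.ball x r, y i = t := by
  refine ⟨x + EuclideanSpace.single i (t - x i), ?_, by simp⟩
  simpa [Metric.mem_ball, dist_eq_norm] using ht

/-- A function of one coordinate which does not vanish for values in an interval meeting the
projection of an open set `Ω` is not almost everywhere zero on `Ω`. -/
theorem not_ae_eq_zero_of_forall_ne_zero {n : ℕ} {i : Fin n} {Ω : Set (EuclideanSpace ℝ (Fin n))}
    (hΩ : IsOpen Ω) {f : EuclideanSpace ℝ (Fin n) → ℝ} {a b : ℝ}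
    (hf : ∀ x, x i ∈ Ioo a b → f x ≠ 0) (hx : ∃ x ∈ Ω, x i ∈ Ioo a b) :
    ¬ f =ᵐ[volume.restrict Ω] 0 := by
  intro hae
  obtain ⟨x, hxΩ, hxi⟩ := hx
  have hopen : IsOpen (Ω ∩ {x | x i ∈ Ioo a b}) :=
    hΩ.inter (isOpen_Ioo.preimage
      (by fun_prop : Continuous fun x : EuclideanSpace ℝ (Fin n) => x i))
  rw [Filter.EventuallyEq, ae_restrict_iff' hΩ.measurableSet] at hae
  refine (hopen.measure_pos volume ⟨x, hxΩ, hxi⟩).ne' (measure_mono_null ?_ hae)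
  exact fun y hy h => hf y hy.2 (h hy.1)

/-- (b) `S_ε^k` is symmetric (`S_ε^k = -S_ε^k`) for every `ε > 0`; and
(c) there exists `ε̄_k > 0` such that for every `ε ∈ (0, ε̄_k)` no element of `S_ε^k`
vanishes almost everywhere on `Ω`. -/
theorem Sset_symmetric_and_avoids_zero {n : ℕ} (hn : 0 < n)
    (Ω : Set (EuclideanSpace ℝ (Fin n))) (hΩo : IsOpen Ω) (hΩb : Bornology.IsBounded Ω)
    (hΩne : Ω.Nonempty) (k : ℕ) :
    (∀ ε : ℝ, 0 < ε → ∀ f : EuclideanSpace ℝ (Fin n) → ℝ,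
      f ∈ Sset n k hn ε ↔ -f ∈ Sset n k hn ε) ∧
    (∃ εb : ℝ, 0 < εb ∧ ∀ ε ∈ Set.Ioo (0 : ℝ) εb, ∀ f ∈ Sset n k hn ε,
      ¬ (f =ᵐ[volume.restrict Ω] (0 : EuclideanSpace ℝ (Fin n) → ℝ))) := by
  refine ⟨fun ε _ f => ⟨neg_mem_Sset, fun h => by simpa using neg_mem_Sset h⟩, ?_⟩
  obtain ⟨x, hx⟩ := hΩne
  obtain ⟨r, hr, hball⟩ := Metric.isOpen_iff.mp hΩo x hx
  set c : ℝ := x ⟨0, hn⟩ with hc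
  set j : ℤ := ⌊c / π⌋
  have hjc : j * π ≤ c := (le_div_iff₀ pi_pos).mp (Int.floor_le _)
  have hcj : c < (j + 1) * π := (div_lt_iff₀ pi_pos).mp (Int.lt_floor_add_one _)
  set l : ℝ := min r ((j + 1) * π - c)
  have hl : 0 < l := lt_min hr (by linarith)
  have hlr : l ≤ r := min_le_left _ _
  have hlj : l ≤ (j + 1) * π - c := min_le_right _ _
  have hk : (0 : ℝ) < k + 1 := by positivity
  set h : ℝ := l / (k + 1)
  have hh : 0 < h := by positivity
  have hkh : (k + 1) * h = l := mul_div_cancel₀ l hk.ne'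
  refine ⟨h / 2, by positivity, ?_⟩
  rintro ε ⟨hε, hεh⟩ f ⟨lam, hlam, hf⟩
  have hlam0 : lam ≠ 0 := by
    rintro rfl
    simp at hlam
  obtain ⟨i, hi⟩ := exists_subinterval_cosPoly_ne_zero hlam0 hh hjc (by linarith)
  refine not_ae_eq_zero_of_forall_ne_zero (i := ⟨0, hn⟩) (a := c + (i : ℕ) * h + ε)
    (b := c + ((i : ℕ) + 1) * h - ε) hΩo (fun y hy => ?_) ?_
  · rw [hf]
    exact Lavg_ne_zero hε hi (by linarith [hy.1]) (by linarith [hy.2])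
  · have h0 : (0 : ℝ) ≤ (i : ℕ) * h := by positivity
    have h1 : ((i : ℕ) : ℝ) + 1 ≤ k + 1 := by exact_mod_cast i.isLt
    have h2 := mul_le_mul_of_nonneg_right h1 hh.le
    obtain ⟨y, hy, hyt⟩ := exists_mem_ball_apply_eq ⟨0, hn⟩ x (r := r)
      (t := c + (i : ℕ) * h + h / 2) (by rw [← hc, abs_of_pos] <;> linarith)
    exact ⟨y, hball hy, by rw [hyt]; constructor <;> linarith⟩
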